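/- Let (N, B, L) be a Hadamard triple in ℝ with 0 ∈ B ∩ L, and write d = gcd(B) (the greatest common divisor of the elements of B). Let K(N,L) be the self-similar set generated by the maps τ_ℓ(x) = (x+ℓ)/N, ℓ ∈ L. Define Λ₀ = −(K(N,L) ∩ (ℤ/d)), where ℤ/d = { m/d : m ∈ ℤ }, and Λ_n = N·Λ_{n−1} + L for n ≥ 1. Then Λ_{n−1} ⊆ Λ_n for all n ≥ 1. -/

import Mathlib

/-- `(N,B,L)` is a Hadamard triple in `ℝ`. -/
def IsHadamardTriple (N : ℕ) (B L : Finset ℤ) : Prop :=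
  2 ≤ N ∧ 2 ≤ B.card ∧ B.card = L.card ∧
    ∀ l ∈ L, ∀ l' ∈ L, l ≠ l' →
      ∑ b ∈ B, Complex.exp (2 * Real.pi * Complex.I * (b : ℂ) * ((l : ℂ) - (l' : ℂ)) / (N : ℂ)) = 0

/-- The self-similar set `K(N,L) = { ∑_{i=1}^∞ ℓ_i/N^i : ℓ_i ∈ L }`. -/
noncomputable def KsetZ (N : ℕ) (L : Finset ℤ) : Set ℝ :=
  { x : ℝ | ∃ a : ℕ → ℤ, (∀ i, a i ∈ L) ∧ x = ∑' i : ℕ, (a i : ℝ) / (N : ℝ) ^ (i + 1) }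

/-!
For `m / d ∈ K(N, L)`, dropping the first digit `ℓ` of a base-`N` expansion shows that
`N * (m / d) - ℓ` again lies in `K(N, L) ∩ ℤ/d`. This set is finite, since `K(N, L)` is bounded.
The elements of `d * L` are pairwise incongruent modulo `N`, since otherwise one of the vanishing
exponential sums over `B` would have all its terms equal to `1`; hence the map `m ↦ N * m - d * ℓ`
on numerators is injective. An injective self-map of a finite set is surjective, which says
precisely that `Λ₀ ⊆ N * Λ₀ + L`; the remaining inclusions follow by applying `X ↦ N * X + L`.
-/

section BaseExpansion

variable {b C : ℝ} {a : ℕ → ℝ}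

theorem hasSum_const_div_pow_succ (hb : 1 < b) (C : ℝ) :
    HasSum (fun i : ℕ ↦ C / b ^ (i + 1)) (C / (b - 1)) := by
  have hgeom : HasSum (fun i : ℕ ↦ b⁻¹ ^ i) (1 - b⁻¹)⁻¹ :=
    hasSum_geometric_of_lt_one (by positivity) (inv_lt_one_of_one_lt₀ hb)
  have hterm : ∀ i : ℕ, C / b ^ (i + 1) = C / b * b⁻¹ ^ i := fun i ↦ by
    rw [inv_pow, pow_succ]
    field_simp
  have hvalue : C / (b - 1) = C / b * (1 - b⁻¹)⁻¹ := by
    have hb' : b - 1 ≠ 0 := (sub_pos.2 hb).ne'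
    field_simp
  simpa only [hterm, hvalue] using hgeom.mul_left (C / b)

theorem norm_div_pow_succ_le (hb : 0 < b) (ha : ∀ i, |a i| ≤ C) (i : ℕ) :
    ‖a i / b ^ (i + 1)‖ ≤ C / b ^ (i + 1) := by
  rw [Real.norm_eq_abs, abs_div, abs_of_pos (by positivity : 0 < b ^ (i + 1))]
  gcongr
  exact ha i

theorem summable_div_pow_succ (hb : 1 < b) (ha : ∀ i, |a i| ≤ C) :
    Summable fun i ↦ a i / b ^ (i + 1) :=
  .of_norm_bounded (hasSum_const_div_pow_succ hb C).summable
    (norm_div_pow_succ_le (zero_lt_one.trans hb) ha)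

theorem abs_tsum_div_pow_succ_le (hb : 1 < b) (ha : ∀ i, |a i| ≤ C) :
    |∑' i, a i / b ^ (i + 1)| ≤ C / (b - 1) :=
  tsum_of_norm_bounded (hasSum_const_div_pow_succ hb C)
    (norm_div_pow_succ_le (zero_lt_one.trans hb) ha)

theorem mul_tsum_div_pow_succ (hb : 1 < b) (ha : ∀ i, |a i| ≤ C) :
    b * ∑' i, a i / b ^ (i + 1) = a 0 + ∑' i, a (i + 1) / b ^ (i + 1) := by
  have hshift : ∀ i, b * (a i / b ^ (i + 1)) = a i / b ^ i := fun i ↦ by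
    rw [pow_succ]
    field_simp
  have hsum : Summable fun i ↦ a i / b ^ i :=
    ((summable_div_pow_succ hb ha).mul_left b).congr hshift
  rw [← tsum_mul_left, tsum_congr hshift, hsum.tsum_eq_zero_add, pow_zero, div_one]

end BaseExpansion

theorem exists_forall_abs_intCast_le (L : Finset ℤ) : ∃ C : ℝ, ∀ l ∈ L, |(l : ℝ)| ≤ C :=
  ⟨_, fun _ hl ↦ Finset.single_le_sum (f := fun l : ℤ ↦ |(l : ℝ)|) (fun _ _ ↦ abs_nonneg _) hl⟩

namespace KsetZ

variable {N : ℕ} {L : Finset ℤ}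

theorem isBounded (hN : 2 ≤ N) : Bornology.IsBounded (KsetZ N L) := by
  obtain ⟨C, hC⟩ := exists_forall_abs_intCast_le L
  refine isBounded_iff_forall_norm_le.2 ⟨C / (N - 1), ?_⟩
  rintro _ ⟨a, ha, rfl⟩
  exact abs_tsum_div_pow_succ_le (Nat.one_lt_cast.2 hN) fun i ↦ hC _ (ha i)

theorem exists_mul_sub_mem (hN : 2 ≤ N) {x : ℝ} (hx : x ∈ KsetZ N L) :
    ∃ l ∈ L, N * x - l ∈ KsetZ N L := by
  obtain ⟨C, hC⟩ := exists_forall_abs_intCast_le L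
  obtain ⟨a, ha, rfl⟩ := hx
  refine ⟨a 0, ha 0, fun i ↦ a (i + 1), fun i ↦ ha (i + 1), ?_⟩
  rw [mul_tsum_div_pow_succ (Nat.one_lt_cast.2 hN) fun i ↦ hC _ (ha i), add_sub_cancel_left]

end KsetZ

theorem finite_setOf_intCast_div_mem {S : Set ℝ} (hS : Bornology.IsBounded S) {d : ℝ}
    (hd : d ≠ 0) : {m : ℤ | m / d ∈ S}.Finite := by
  have hcobounded : Sᶜ ∈ Filter.cocompact ℝ := Metric.cobounded_eq_cocompact (α := ℝ) ▸ hS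
  have hfinite : (zmultiplesHom ℝ d⁻¹ ⁻¹' Sᶜ)ᶜ.Finite :=
    Int.tendsto_zmultiplesHom_cofinite (inv_ne_zero hd) hcobounded
  exact hfinite.subset fun m hm ↦ by simpa [div_eq_mul_inv] using hm

theorem exists_mul_sub_eq_of_forall_exists_mul_sub_mem {N : ℕ} (hN : N ≠ 0) {S D : Set ℤ}
    (hS : S.Finite) (hD : D.InjOn (Int.cast : ℤ → ZMod N))
    (hstep : ∀ m ∈ S, ∃ r ∈ D, N * m - r ∈ S) {m : ℤ} (hm : m ∈ S) :
    ∃ m' ∈ S, ∃ r ∈ D, N * m' - r = m := by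
  choose! r hrD hrS using hstep
  have hinj : S.InjOn fun m ↦ N * m - r m := by
    intro x hx y hy (hxy : N * x - r x = N * y - r y)
    have hr : r x = r y := hD (hrD x hx) (hrD y hy) <| by
      simpa using congrArg (Int.cast : ℤ → ZMod N) hxy
    rw [hr, sub_left_inj] at hxy
    exact mul_left_cancel₀ (Nat.cast_ne_zero.2 hN) hxy
  obtain ⟨m', hm', rfl⟩ := ((hS.injOn_iff_bijOn_of_mapsTo hrS).1 hinj).surjOn hm
  exact ⟨m', hm', r m', hrD m' hm', rfl⟩

theorem KsetZ.exists_intCast_div_eq {N : ℕ} (hN : 2 ≤ N) {L : Finset ℤ} {d : ℤ} (hd : d ≠ 0)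
    (hL : Set.InjOn (fun l : ℤ ↦ ((d * l : ℤ) : ZMod N)) L) {m : ℤ}
    (hm : (m / d : ℝ) ∈ KsetZ N L) :
    ∃ m' : ℤ, (m' / d : ℝ) ∈ KsetZ N L ∧ ∃ l ∈ L, (m / d : ℝ) = N * (m' / d) - l := by
  have hd' : (d : ℝ) ≠ 0 := Int.cast_ne_zero.2 hd
  have hnum : ∀ k l : ℤ, ((N * k - d * l : ℤ) / d : ℝ) = N * (k / d) - l := fun k l ↦ by
    push_cast
    field_simp
  have hstep : ∀ k ∈ {k : ℤ | (k / d : ℝ) ∈ KsetZ N L}, ∃ r ∈ (d * ·) '' (L : Set ℤ),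
      N * k - r ∈ {k : ℤ | (k / d : ℝ) ∈ KsetZ N L} := by
    intro k hk
    obtain ⟨l, hl, hmem⟩ := KsetZ.exists_mul_sub_mem hN hk
    exact ⟨d * l, Set.mem_image_of_mem _ hl, by rwa [Set.mem_ofPred_eq, hnum]⟩
  obtain ⟨m', hm', _, ⟨l, hl, rfl⟩, rfl⟩ :=
    exists_mul_sub_eq_of_forall_exists_mul_sub_mem (Nat.ne_zero_of_lt hN)
      (finite_setOf_intCast_div_mem (KsetZ.isBounded hN) hd') hL.image_of_comp hstep hm
  exact ⟨m', hm', l, hl, hnum m' l⟩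

theorem exp_two_pi_mul_I_mul_div_eq_one {N : ℕ} (hN : N ≠ 0) {b t : ℤ} (h : (N : ℤ) ∣ b * t) :
    Complex.exp (2 * Real.pi * Complex.I * b * t / N) = 1 := by
  obtain ⟨k, hk⟩ := h
  have hk' : (b * t : ℂ) = N * k := by exact_mod_cast hk
  refine Complex.exp_eq_one_iff.2 ⟨k, ?_⟩
  rw [mul_assoc _ (b : ℂ), hk']
  field_simp

namespace IsHadamardTriple

variable {N : ℕ} {B L : Finset ℤ}

theorem gcd_ne_zero (h : IsHadamardTriple N B L) : B.gcd id ≠ 0 := by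
  obtain ⟨b, hb, hb0⟩ := Finset.exists_mem_ne h.2.1 0
  exact fun h0 ↦ hb0 (Finset.gcd_eq_zero_iff.1 h0 b hb)

theorem injOn_intCast_mul (h : IsHadamardTriple N B L) {d : ℤ} (hd : ∀ b ∈ B, d ∣ b) :
    Set.InjOn (fun l : ℤ ↦ ((d * l : ℤ) : ZMod N)) L := by
  obtain ⟨hN, hB, -, horth⟩ := h
  intro l hl l' hl' hll'
  have hdvd : (N : ℤ) ∣ d * (l - l') := by
    rw [mul_sub]
    exact (ZMod.intCast_eq_intCast_iff_dvd_sub _ _ N).1 hll'.symm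
  by_contra hne
  have hsum : ∑ b ∈ B, Complex.exp (2 * Real.pi * Complex.I * b * (l - l') / N) = B.card := by
    rw [Finset.card_eq_sum_ones, Nat.cast_sum, Nat.cast_one]
    refine Finset.sum_congr rfl fun b hb ↦ ?_
    exact_mod_cast exp_two_pi_mul_I_mul_div_eq_one (Nat.ne_zero_of_lt hN)
      (hdvd.trans (mul_dvd_mul_right (hd b hb) _))
  have hcard : (B.card : ℂ) = 0 := hsum.symm.trans (horth l hl l' hl' hne)
  exact (Nat.ne_zero_of_lt hB) (Nat.cast_eq_zero.1 hcard)

end IsHadamardTriple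

theorem spectrum_levels_increasing_general {N : ℕ} (hN : 2 ≤ N) {L : Finset ℤ} {d : ℤ}
    (hd : d ≠ 0) (hL : Set.InjOn (fun l : ℤ ↦ ((d * l : ℤ) : ZMod N)) L) {Λ : ℕ → Set ℝ}
    (hΛ0 : Λ 0 = (fun x : ℝ ↦ -x) '' (KsetZ N L ∩ {x : ℝ | ∃ m : ℤ, x = (m : ℝ) / (d : ℝ)}))
    (hΛ : ∀ n, Λ (n + 1) = {y : ℝ | ∃ x ∈ Λ n, ∃ l ∈ L, y = (N : ℝ) * x + (l : ℝ)}) :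
    ∀ n, Λ n ⊆ Λ (n + 1) := by
  intro n
  induction n with
  | zero =>
    rw [hΛ 0, hΛ0]
    rintro _ ⟨_, ⟨hmem, m, rfl⟩, rfl⟩
    obtain ⟨m', hmem', l, hl, heq⟩ := KsetZ.exists_intCast_div_eq hN hd hL hmem
    refine ⟨_, Set.mem_image_of_mem _ ⟨hmem', m', rfl⟩, l, hl, ?_⟩
    simp only [heq]
    ring
  | succ n ih =>
    rw [hΛ (n + 1)]
    intro y hy
    obtain ⟨x, hx, l, hl, rfl⟩ := (hΛ n).subset hy
    exact ⟨x, ih hx, l, hl, rfl⟩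

theorem spectrum_levels_increasing (N : ℕ) (B L : Finset ℤ)
    (h : IsHadamardTriple N B L) (hB0 : (0 : ℤ) ∈ B) (hL0 : (0 : ℤ) ∈ L)
    (d : ℤ) (hd : d = B.gcd id)
    (Λ : ℕ → Set ℝ)
    (hΛ0 : Λ 0 = (fun x : ℝ => -x) '' (KsetZ N L ∩ { x : ℝ | ∃ m : ℤ, x = (m : ℝ) / (d : ℝ) }))
    (hΛ : ∀ n, Λ (n + 1) = { y : ℝ | ∃ x ∈ Λ n, ∃ l ∈ L, y = (N : ℝ) * x + (l : ℝ) }) :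
    ∀ n, Λ n ⊆ Λ (n + 1) :=
  spectrum_levels_increasing_general h.1 (hd ▸ h.gcd_ne_zero)
    (h.injOn_intCast_mul fun _ hb ↦ hd ▸ Finset.gcd_dvd hb) hΛ0 hΛ
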